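/- Let v: ℝ^d → ℝ^d be v(e) = (e_1 |e_1|^{q−2}, …, e_d |e_d|^{q−2}), fix Borel, F_n-measurable versions g_n of E_μ[𝔻_n f(X) | F_n], set Φ = (Φ_1, …, Φ_N) with Φ_n = v(g_n), write r = ‖ᵒ𝔻f‖_{L^q(μ)}, and fix u > 0. For δ > 0 let π_δ = (Id, Id + u δ Δ^{−1} ∘ Φ)_# μ. Then π_δ ∈ Π_c(μ, *), E_{π_δ}[c_N(X, Y)] = u^p r^q δ^p, and lim_{δ→0+} E_{π_δ}[f(Y) − f(X)]/δ = u r^q. -/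

import Mathlib

open MeasureTheory Filter Set
open scoped ENNReal

noncomputable section

/-- Discrete path space `X = (ℝ^d)^N`. -/
abbrev PathD (N d : ℕ) : Type := Fin N → Fin d → ℝ

/-- The `ℓ_e` norm on `ℝ^d`. -/
def lpnorm {d : ℕ} (e : ℝ) (v : Fin d → ℝ) : ℝ := (∑ i, |v i| ^ e) ^ (1 / e)

/-- Coordinate `x_n` of a path, with the convention `x_0 = 0` (and `x_n = 0` for `n > N`). -/
def coord {N d : ℕ} (x : PathD N d) (n : ℕ) : Fin d → ℝ :=
  if h : 1 ≤ n ∧ n ≤ N then x ⟨n - 1, by omega⟩ else 0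

/-- The cost `c_N(x,y) = Σ_{n=1}^N |Δx_n − Δy_n|^p` (with `|·|` the `ℓ_p` norm). -/
def cN {N d : ℕ} (p : ℝ) (x y : PathD N d) : ℝ :=
  ∑ n ∈ Finset.Icc 1 N,
    lpnorm p ((coord x n - coord x (n - 1)) - (coord y n - coord y (n - 1))) ^ p

/-- The σ-algebra `F_n = σ(x_1, …, x_n)` on the discrete path space. -/
def Fn (N d n : ℕ) : MeasurableSpace (PathD N d) :=
  MeasurableSpace.comap (fun x (i : Fin N) => if (i : ℕ) + 1 ≤ n then x i else 0) inferInstance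

/-- Conditional independence of `m₁` and `m₂` given `m'` under `π`, expressed through
conditional expectations of indicators. -/
def CondIndepOn {Ω : Type*} [MeasurableSpace Ω] (π : Measure Ω)
    (m' m₁ m₂ : MeasurableSpace Ω) : Prop :=
  ∀ A B : Set Ω, MeasurableSet[m₁] A → MeasurableSet[m₂] B →
    (π[(A ∩ B).indicator (fun _ => (1 : ℝ)) | m']) =ᵐ[π]
      (π[A.indicator (fun _ => (1 : ℝ)) | m']) * (π[B.indicator (fun _ => (1 : ℝ)) | m'])

/-- `π` is a coupling with first marginal `μ` which is causal to its second marginal: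
for every `n`, `σ(Y_1,…,Y_n)` is conditionally independent of `σ(X_1,…,X_N)` given `F_n`. -/
def IsCausalStar {N d : ℕ} (μ : Measure (PathD N d))
    (π : Measure (PathD N d × PathD N d)) : Prop :=
  π.map Prod.fst = μ ∧
  ∀ n : ℕ, CondIndepOn π ((Fn N d n).comap Prod.fst)
    ((Fn N d n).comap Prod.snd) ((Fn N d N).comap Prod.fst)

/-- `π` is a causal coupling of `(μ, ν)`. -/
def IsCausalCoupling {N d : ℕ} (μ ν : Measure (PathD N d))
    (π : Measure (PathD N d × PathD N d)) : Prop :=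
  π.map Prod.snd = ν ∧ IsCausalStar μ π

/-- `π` is a bicausal coupling of `(μ, ν)`: both `π` and its swap are causal. -/
def IsBicausalCoupling {N d : ℕ} (μ ν : Measure (PathD N d))
    (π : Measure (PathD N d × PathD N d)) : Prop :=
  IsCausalCoupling μ ν π ∧
  (∀ n : ℕ, CondIndepOn π ((Fn N d n).comap Prod.snd)
    ((Fn N d n).comap Prod.fst) ((Fn N d N).comap Prod.snd))

/-- `μ` is a martingale measure on the discrete path space: every coordinate is integrable
and `E_μ[X_n | F_{n−1}] = X_{n−1}` a.s. (with `X_0 = 0`). -/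
def IsMartingaleMeasure {N d : ℕ} (μ : Measure (PathD N d)) : Prop :=
  ∀ n : ℕ, 1 ≤ n → n ≤ N →
    Integrable (fun x => coord x n) μ ∧
    (μ[(fun x => coord x n) | Fn N d (n - 1)]) =ᵐ[μ] (fun x => coord x (n - 1))

/-- The discrete pathwise Malliavin derivative `𝔻_n f = Σ_{k=n}^N ∂_k f`, where `∂_k f` is the
`ℝ^d`-valued partial gradient of `f` in the `k`-th coordinate block (`k = 1, …, N`). -/
def Dn {N d : ℕ} (f : PathD N d → ℝ) (n : ℕ) (x : PathD N d) : Fin d → ℝ :=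
  fun j => ∑ k : Fin N, if n ≤ (k : ℕ) + 1 then
    fderiv ℝ f x (Pi.single k (Pi.single j 1)) else 0

/-- Standing assumptions on the penalty function `L : [0,∞) → [0,∞]`:
continuous, non-decreasing, `L(0) = 0` and `liminf_{u→∞} L(u)/u^p = +∞`. -/
structure PenaltyAssumptions (p : ℝ) (L : ℝ → ℝ≥0∞) : Prop where
  cont : ContinuousOn L (Set.Ici 0)
  mono : MonotoneOn L (Set.Ici 0)
  zero : L 0 = 0
  growth : Tendsto (fun u : ℝ => L u / ENNReal.ofReal (u ^ p)) atTop (nhds ⊤)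

/-- The convex conjugate `L*(v) = sup_{u ≥ 0} { u v − L(u) }`, valued in the extended reals. -/
def Lconj (L : ℝ → ℝ≥0∞) (v : ℝ) : EReal :=
  ⨆ u : {u : ℝ // 0 ≤ u}, ((u.1 * v : ℝ) : EReal) - ((L u.1 : ℝ≥0∞) : EReal)

/-- The expected transport cost `E_π[c_N(X,Y)]` of a coupling. -/
def costD {N d : ℕ} (p : ℝ) (π : Measure (PathD N d × PathD N d)) : ℝ :=
  ∫ z, cN p z.1 z.2 ∂π

/-- The penalised causal DRO value
`V(δ) = sup_{π ∈ Π_c(μ,*), E_π[c_N] < ∞} { E_π[f(Y)] − δ L(E_π[c_N(X,Y)]^{1/p}/δ) }`,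
valued in the extended reals. -/
def VD {N d : ℕ} (p : ℝ) (L : ℝ → ℝ≥0∞) (μ : Measure (PathD N d))
    (f : PathD N d → ℝ) (δ : ℝ) : EReal :=
  ⨆ π : {π : Measure (PathD N d × PathD N d) //
      IsProbabilityMeasure π ∧ IsCausalStar μ π ∧
      Integrable (fun z => cN p z.1 z.2) π},
    ((∫ z, f z.2 ∂π.1 : ℝ) : EReal) -
      ((ENNReal.ofReal δ * L ((costD p π.1) ^ (1 / p) / δ) : ℝ≥0∞) : EReal)

/-- The `L^q(μ)`-norm `(Σ_{n=1}^N E_μ[|E_μ[𝔻_n f(X)|F_n]|_*^q])^{1/q}` of the optional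
projection of the discrete pathwise Malliavin derivative. -/
def optionalNorm {N d : ℕ} (q : ℝ) (μ : Measure (PathD N d)) (f : PathD N d → ℝ) : ℝ :=
  (∑ n ∈ Finset.Icc 1 N, ∫ x, lpnorm q ((μ[Dn f n | Fn N d n]) x) ^ q ∂μ) ^ (1 / q)

/-- The map `v(e) = (e_1|e_1|^{q−2}, …, e_d|e_d|^{q−2})` on `ℝ^d`. -/
def vmap {d : ℕ} (q : ℝ) (e : Fin d → ℝ) : Fin d → ℝ :=
  fun i => e i * |e i| ^ (q - 2)

/-- The inverse `Δ^{-1}` of the increment map: `(Δ^{-1} y)_n = Σ_{k=1}^n y_k`. -/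
def DeltaInv {N d : ℕ} (y : PathD N d) : PathD N d :=
  fun i => ∑ k : Fin N, if (k : ℕ) ≤ (i : ℕ) then y k else 0

/-- A process `h = (h_n)_{n=1}^N` is predictable if `h_n` is `F_{n−1}`-measurable. -/
def IsPredictable {N d : ℕ} (h : ℕ → PathD N d → Fin d → ℝ) : Prop :=
  ∀ n : ℕ, 1 ≤ n → n ≤ N → Measurable[Fn N d (n - 1)] (h n)

end

open MeasureTheory Filter

theorem abs_vmap_rpow {d : ℕ} {p q : ℝ} (hpq : p.HolderConjugate q) (e : Fin d → ℝ) (i : Fin d) :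
    |vmap q e i| ^ p = |e i| ^ q := by
  rcases eq_or_ne (e i) 0 with h | h
  · simp [vmap, h, Real.zero_rpow hpq.ne_zero, Real.zero_rpow hpq.symm.ne_zero]
  · have h0 : 0 < |e i| := abs_pos.2 h
    have h1 : |vmap q e i| = |e i| ^ (q - 1) := by
      rw [vmap, abs_mul, abs_of_nonneg (Real.rpow_nonneg h0.le _)]
      nth_rewrite 1 [← Real.rpow_one |e i|]
      rw [← Real.rpow_add h0]
      ring_nf
    rw [h1, ← Real.rpow_mul h0.le, hpq.symm.sub_one_mul_conj]

theorem vmap_mul_self {d : ℕ} {q : ℝ} (hq : q ≠ 0) (e : Fin d → ℝ) (i : Fin d) :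
    vmap q e i * e i = |e i| ^ q := by
  rcases eq_or_ne (e i) 0 with h | h
  · simp [vmap, h, Real.zero_rpow hq]
  · have h0 : 0 < |e i| := abs_pos.2 h
    have h1 : vmap q e i * e i = |e i| ^ (q - 2) * |e i| ^ (2 : ℝ) := by
      rw [vmap, Real.rpow_two, sq_abs]
      ring
    rw [h1, ← Real.rpow_add h0]
    ring_nf

theorem measurable_vmap {d : ℕ} (q : ℝ) : Measurable (vmap q : (Fin d → ℝ) → Fin d → ℝ) := by
  unfold vmap
  fun_prop

theorem lpnorm_nonneg {d : ℕ} (e : ℝ) (v : Fin d → ℝ) : 0 ≤ lpnorm e v := by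
  unfold lpnorm
  positivity

theorem lpnorm_rpow {d : ℕ} {e : ℝ} (he : e ≠ 0) (v : Fin d → ℝ) :
    lpnorm e v ^ e = ∑ i, |v i| ^ e := by
  rw [lpnorm, ← Real.rpow_mul (by positivity), one_div_mul_cancel he, Real.rpow_one]

theorem abs_le_lpnorm {d : ℕ} {e : ℝ} (he : 0 < e) (v : Fin d → ℝ) (i : Fin d) :
    |v i| ≤ lpnorm e v := by
  rw [← Real.rpow_le_rpow_iff (abs_nonneg _) (lpnorm_nonneg e v) he, lpnorm_rpow he.ne']
  exact Finset.single_le_sum (f := fun i => |v i| ^ e) (fun i _ => by positivity)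
    (Finset.mem_univ i)

theorem sum_Icc_one_eq_sum_fin {M : Type*} [AddCommMonoid M] (N : ℕ) (F : ℕ → M) :
    ∑ n ∈ Finset.Icc 1 N, F n = ∑ i : Fin N, F ((i : ℕ) + 1) := by
  rw [Fin.sum_univ_eq_sum_range (fun i => F (i + 1)), Finset.range_eq_Ico,
    Finset.sum_Ico_add' F 0 N 1]
  rfl

theorem optionalNorm_rpow {N d : ℕ} {q : ℝ} (hq : q ≠ 0) (μ : Measure (PathD N d))
    (f : PathD N d → ℝ) :
    optionalNorm q μ f ^ q =
      ∑ n : Fin N, ∫ x, ∑ j, |(μ[Dn f (n + 1) | Fn N d (n + 1)]) x j| ^ q ∂μ := by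
  rw [optionalNorm, ← Real.rpow_mul, one_div_mul_cancel hq, Real.rpow_one,
    sum_Icc_one_eq_sum_fin]
  · simp_rw [lpnorm_rpow hq]
  · exact Finset.sum_nonneg fun n _ => integral_nonneg fun x =>
      Real.rpow_nonneg (lpnorm_nonneg _ _) _

theorem coord_sub_coord_deltaInv {N d : ℕ} (y : PathD N d) (i : Fin N) :
    coord (DeltaInv y) ((i : ℕ) + 1) - coord (DeltaInv y) (i : ℕ) = y i := by
  have hi := i.2
  have key : ∀ k : Fin N, (if (k : ℕ) ≤ (i : ℕ) then y k else 0) =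
      (if k = i then y k else 0) + (if (k : ℕ) + 1 ≤ (i : ℕ) then y k else 0) := by
    intro k
    rcases lt_trichotomy (k : ℕ) i with h | h | h
    · simp [h.le, Fin.ext_iff, h.ne, Nat.succ_le_of_lt h]
    · simp [Fin.ext h]
    · have h1 : ¬ (k : ℕ) ≤ i := by omega
      have h2 : ¬ (k : ℕ) + 1 ≤ i := by omega
      have h3 : k ≠ i := by rintro rfl; omega
      simp [h1, h2, h3]
  have h1 : coord (DeltaInv y) ((i : ℕ) + 1) =
      y i + ∑ k : Fin N, if (k : ℕ) + 1 ≤ (i : ℕ) then y k else 0 := by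
    rw [coord, dif_pos ⟨by omega, by omega⟩]
    simp only [DeltaInv, Nat.add_sub_cancel]
    rw [Finset.sum_congr rfl fun k _ => key k, Finset.sum_add_distrib]
    simp
  have h2 : coord (DeltaInv y) (i : ℕ) =
      ∑ k : Fin N, if (k : ℕ) + 1 ≤ (i : ℕ) then y k else 0 := by
    rcases Nat.eq_zero_or_pos (i : ℕ) with h | h
    · rw [coord, dif_neg (by omega)]
      simp [h]
    · rw [coord, dif_pos ⟨by omega, by omega⟩]
      simp only [DeltaInv]
      refine Finset.sum_congr rfl fun k _ => ?_
      congr 1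
      exact propext (by omega)
  rw [h1, h2, add_sub_cancel_right]

theorem coord_add {N d : ℕ} (x y : PathD N d) (n : ℕ) :
    coord (x + y) n = coord x n + coord y n := by
  unfold coord
  split_ifs <;> simp

theorem coord_smul {N d : ℕ} (c : ℝ) (x : PathD N d) (n : ℕ) :
    coord (c • x) n = c • coord x n := by
  unfold coord
  split_ifs <;> simp

theorem measurable_coord {N d : ℕ} (n : ℕ) :
    Measurable fun x : PathD N d => coord x n := by
  unfold coord
  split_ifs <;> fun_prop

theorem measurable_lpnorm {d : ℕ} (e : ℝ) : Measurable (lpnorm e : (Fin d → ℝ) → ℝ) := by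
  unfold lpnorm
  fun_prop

theorem measurable_cN {N d : ℕ} (p : ℝ) :
    Measurable fun z : PathD N d × PathD N d => cN p z.1 z.2 := by
  have h1 (n : ℕ) : Measurable fun z : PathD N d × PathD N d => coord z.1 n :=
    (measurable_coord n).comp measurable_fst
  have h2 (n : ℕ) : Measurable fun z : PathD N d × PathD N d => coord z.2 n :=
    (measurable_coord n).comp measurable_snd
  refine Finset.measurable_sum _ fun n _ => ?_
  exact ((measurable_lpnorm p).comp
    (((h1 n).sub (h1 (n - 1))).sub ((h2 n).sub (h2 (n - 1))))).pow_const p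

theorem cN_add_smul_deltaInv {N d : ℕ} {p : ℝ} (hp : p ≠ 0) {c : ℝ} (hc : 0 ≤ c)
    (x y : PathD N d) :
    cN p x (x + c • DeltaInv y) = c ^ p * ∑ n, ∑ j, |y n j| ^ p := by
  rw [cN, sum_Icc_one_eq_sum_fin, Finset.mul_sum]
  refine Finset.sum_congr rfl fun n _ => ?_
  have h : coord x ((n : ℕ) + 1) - coord x ((n : ℕ) + 1 - 1) -
      (coord (x + c • DeltaInv y) ((n : ℕ) + 1) -
        coord (x + c • DeltaInv y) ((n : ℕ) + 1 - 1)) = -(c • y n) := by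
    rw [← coord_sub_coord_deltaInv y n]
    simp only [coord_add, coord_smul, Nat.add_sub_cancel, smul_sub]
    abel
  rw [h, lpnorm_rpow hp, Finset.mul_sum]
  refine Finset.sum_congr rfl fun j _ => ?_
  rw [Pi.neg_apply, abs_neg, Pi.smul_apply, smul_eq_mul, abs_mul, abs_of_nonneg hc,
    Real.mul_rpow hc (abs_nonneg _)]

theorem measurable_deltaInv {N d : ℕ} : Measurable (DeltaInv : PathD N d → PathD N d) := by
  unfold DeltaInv
  refine measurable_pi_lambda _ fun i => Finset.measurable_sum _ fun k _ => ?_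
  split_ifs <;> fun_prop

theorem fderiv_apply_eq_sum {N d : ℕ} (f : PathD N d → ℝ) (x h : PathD N d) :
    fderiv ℝ f x h = ∑ k, ∑ j, h k j * fderiv ℝ f x (Pi.single k (Pi.single j 1)) := by
  have : h = ∑ k, ∑ j, h k j • (Pi.single k (Pi.single j 1) : PathD N d) := by
    ext k j
    rw [Finset.sum_apply, Finset.sum_apply, Finset.sum_eq_single k]
    · simp [Finset.sum_apply, Pi.single_apply]
    · intro l _ hl
      simp [Finset.sum_apply, hl.symm]
    · simp
  conv_lhs => rw [this]
  simp

theorem fderiv_deltaInv {N d : ℕ} (f : PathD N d → ℝ) (x y : PathD N d) :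
    fderiv ℝ f x (DeltaInv y) = ∑ n : Fin N, ∑ j, y n j * Dn f ((n : ℕ) + 1) x j := by
  rw [fderiv_apply_eq_sum]
  have h1 (k : Fin N) (j : Fin d) : DeltaInv y k j =
      ∑ n : Fin N, if (n : ℕ) ≤ (k : ℕ) then y n j else 0 := by
    rw [DeltaInv, Finset.sum_apply]
    refine Finset.sum_congr rfl fun n _ => ?_
    split_ifs <;> rfl
  simp only [h1, Dn, Finset.sum_mul, Finset.mul_sum]
  rw [Finset.sum_congr rfl fun k _ => Finset.sum_comm, Finset.sum_comm]
  refine Finset.sum_congr rfl fun n _ => ?_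
  rw [Finset.sum_comm]
  refine Finset.sum_congr rfl fun j _ => Finset.sum_congr rfl fun k _ => ?_
  by_cases hnk : (n : ℕ) ≤ k <;> simp [hnk]

theorem fderiv_single_eq_sub {N d : ℕ} (f : PathD N d → ℝ) (x : PathD N d)
    (k : Fin N) (j : Fin d) :
    fderiv ℝ f x (Pi.single k (Pi.single j 1)) =
      Dn f ((k : ℕ) + 1) x j - Dn f ((k : ℕ) + 2) x j := by
  rw [Dn, Dn, ← Finset.sum_sub_distrib, Finset.sum_eq_single k]
  · simp
  · intro l _ hl
    have : (l : ℕ) ≠ k := fun h => hl (Fin.ext h)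
    by_cases h : (k : ℕ) + 1 ≤ l + 1
    · rw [if_pos h, if_pos (by omega), sub_self]
    · rw [if_neg h, if_neg (by omega), sub_self]
  · simp

theorem norm_fderiv_le {N d : ℕ} {f : PathD N d → ℝ} {x : PathD N d} {q B : ℝ} (hq : 0 < q)
    (hB : ∀ n : ℕ, lpnorm q (Dn f n x) ≤ B) :
    ‖fderiv ℝ f x‖ ≤ (N * d * 2) * B := by
  have hB0 : 0 ≤ B := (lpnorm_nonneg _ _).trans (hB 0)
  refine ContinuousLinearMap.opNorm_le_bound _ (by positivity) fun h => ?_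
  rw [fderiv_apply_eq_sum]
  calc _ ≤ ∑ k : Fin N, ∑ j : Fin d, ‖h‖ * (2 * B) := by
        refine (norm_sum_le _ _).trans (Finset.sum_le_sum fun k _ => ?_)
        refine (norm_sum_le _ _).trans (Finset.sum_le_sum fun j _ => ?_)
        rw [norm_mul]
        gcongr
        · exact (norm_le_pi_norm (h k) j).trans (norm_le_pi_norm h k)
        · rw [fderiv_single_eq_sub, Real.norm_eq_abs]
          have h1 := (abs_le_lpnorm hq (Dn f (k + 1) x) j).trans (hB _)
          have h2 := (abs_le_lpnorm hq (Dn f (k + 2) x) j).trans (hB _)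
          have h3 := abs_sub (Dn f (k + 1) x j) (Dn f (k + 2) x j)
          linarith
    _ = _ := by
        simp
        ring

theorem continuous_Dn {N d : ℕ} {f : PathD N d → ℝ} (hf : ContDiff ℝ 1 f) (n : ℕ) :
    Continuous (Dn f n) := by
  have h := hf.continuous_fderiv one_ne_zero
  unfold Dn
  refine continuous_pi fun j => continuous_finsetSum _ fun k _ => ?_
  split_ifs
  · exact h.clm_apply continuous_const
  · exact continuous_const

theorem measurable_apply_Fn {N d n : ℕ} {i : Fin N} (h : (i : ℕ) + 1 ≤ n) :
    Measurable[Fn N d n] fun x : PathD N d => x i := by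
  have h1 := (measurable_pi_apply (X := fun _ : Fin N => Fin d → ℝ) i).comp
    (comap_measurable
      (fun (x : PathD N d) (i : Fin N) => if (i : ℕ) + 1 ≤ n then x i else 0))
  simpa only [Function.comp_def, if_pos h] using! h1

theorem measurable_Fn_iff {N d n : ℕ} {Ω : Type*} {m : MeasurableSpace Ω} {T : Ω → PathD N d} :
    Measurable[m, Fn N d n] T ↔
      ∀ i : Fin N, (i : ℕ) + 1 ≤ n → Measurable fun ω => T ω i := by
  refine ⟨fun h i hi => (measurable_apply_Fn hi).comp h, fun h => ?_⟩
  refine measurable_comap_iff.2 (measurable_pi_iff.2 fun i => ?_)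
  by_cases hi : (i : ℕ) + 1 ≤ n
  · simpa only [Function.comp_def, if_pos hi] using h i hi
  · simp only [Function.comp_def, if_neg hi]
    exact measurable_const

theorem Fn_mono {N d n m : ℕ} (h : n ≤ m) : Fn N d n ≤ Fn N d m :=
  fun _ hs => (measurable_Fn_iff (T := id)).2 (fun _ hi => measurable_apply_Fn (hi.trans h)) hs

theorem Fn_le (N d n : ℕ) : Fn N d n ≤ MeasurableSpace.pi :=
  fun _ hs => (measurable_Fn_iff (T := id)).2 (fun i _ => measurable_pi_apply i) hs

theorem condIndepOn_of_forall_ae_eq {Ω : Type*} {m' m₁ m₂ m₀ : MeasurableSpace Ω}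
    {π : Measure Ω} [IsFiniteMeasure π] (h' : m' ≤ m₀) (h₂ : m₂ ≤ m₀)
    (h : ∀ A, MeasurableSet[m₁] A → ∃ A', MeasurableSet[m'] A' ∧ A =ᵐ[π] A') :
    CondIndepOn π m' m₁ m₂ := by
  intro A B hA hB
  obtain ⟨A', hA'm, hAA'⟩ := h A hA
  have h1 : (A ∩ B).indicator (fun _ => (1 : ℝ)) =ᵐ[π]
      A'.indicator (B.indicator fun _ => (1 : ℝ)) := by
    rw [Set.indicator_indicator]
    exact indicator_ae_eq_of_ae_eq_set (hAA'.inter (ae_eq_refl B))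
  have h2 : A.indicator (fun _ => (1 : ℝ)) =ᵐ[π] A'.indicator (fun _ => (1 : ℝ)) :=
    indicator_ae_eq_of_ae_eq_set hAA'
  have h3 : π[A'.indicator (fun _ => (1 : ℝ)) | m'] = A'.indicator (fun _ => (1 : ℝ)) :=
    condExp_of_stronglyMeasurable h' (stronglyMeasurable_const.indicator hA'm)
      ((integrable_const _).indicator (h' _ hA'm))
  have h4 : π[A'.indicator (B.indicator fun _ => (1 : ℝ)) | m'] =ᵐ[π]
      A'.indicator (π[B.indicator (fun _ => (1 : ℝ)) | m']) :=
    condExp_indicator ((integrable_const _).indicator (h₂ _ hB)) hA'm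
  filter_upwards [condExp_congr_ae (m := m') h1, condExp_congr_ae (m := m') h2, h4]
    with z hz1 hz2 hz4
  rw [hz1, hz4, Pi.mul_apply, hz2, h3]
  by_cases hz : z ∈ A' <;> simp [hz]

theorem isCausalStar_map_prodMk {N d : ℕ} {μ : Measure (PathD N d)} [IsProbabilityMeasure μ]
    {T : PathD N d → PathD N d} (hTm : Measurable T)
    (hT : ∀ n, Measurable[Fn N d n, Fn N d n] T) :
    IsCausalStar μ (μ.map fun x => (x, T x)) := by
  have hpair : Measurable fun x => (x, T x) := measurable_id.prodMk hTm
  have : IsProbabilityMeasure (μ.map fun x => (x, T x)) :=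
    Measure.isProbabilityMeasure_map hpair.aemeasurable
  have hle (n : ℕ) : (Fn N d n).comap (Prod.fst : PathD N d × PathD N d → PathD N d) ≤
      Prod.instMeasurableSpace :=
    (MeasurableSpace.comap_mono (Fn_le N d n)).trans measurable_fst.comap_le
  have hgraph : ∀ᵐ z ∂(μ.map fun x => (x, T x)), z.2 = T z.1 :=
    (ae_map_iff hpair.aemeasurable
      (measurableSet_eq_fun measurable_snd (hTm.comp measurable_fst))).2 (ae_of_all _ fun _ => rfl)
  refine ⟨?_, fun n => condIndepOn_of_forall_ae_eq (hle n) (hle N) ?_⟩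
  · rw [Measure.map_map measurable_fst hpair]
    exact Measure.map_id
  · rintro _ ⟨S, hS, rfl⟩
    refine ⟨Prod.fst ⁻¹' (T ⁻¹' S), ⟨_, hT n hS, rfl⟩, eventuallyEq_set.2 ?_⟩
    filter_upwards [hgraph] with z hz
    simp only [Set.mem_preimage, hz]

theorem measurable_Fn_add_smul_deltaInv {N d : ℕ} (c : ℝ) {Φ : PathD N d → PathD N d}
    (hΦ : ∀ k : Fin N, Measurable[Fn N d (k + 1)] fun x => Φ x k) (n : ℕ) :
    Measurable[Fn N d n, Fn N d n] fun x => x + c • DeltaInv (Φ x) := by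
  refine measurable_Fn_iff.2 fun i hi => ?_
  have h : Measurable[Fn N d n] fun x : PathD N d => DeltaInv (Φ x) i := by
    refine Finset.measurable_sum _ fun k _ => ?_
    by_cases hk : (k : ℕ) ≤ i
    · simpa only [if_pos hk] using (hΦ k).mono (Fn_mono (by omega)) le_rfl
    · simp only [if_neg hk]
      exact measurable_const
  exact (measurable_apply_Fn hi).add (h.const_smul c)

theorem memLp_id_of_integrable_norm_rpow {E : Type*} [NormedAddCommGroup E] [MeasurableSpace E]
    [BorelSpace E] [SecondCountableTopology E] {μ : Measure E} {p : ℝ} (hp : 0 < p)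
    (h : Integrable (fun x : E => ‖x‖ ^ p) μ) : MemLp (fun x : E => x) (ENNReal.ofReal p) μ := by
  rw [← integrable_norm_rpow_iff (by fun_prop) (by simpa using hp) ENNReal.ofReal_ne_top,
    ENNReal.toReal_ofReal hp.le]
  exact h

theorem memLp_of_norm_le_one_add_rpow {E F : Type*} [NormedAddCommGroup E] [NormedAddCommGroup F]
    [MeasurableSpace E] {μ : Measure E} [IsFiniteMeasure μ] {p q C : ℝ} (hpq : p.HolderConjugate q)
    (hid : MemLp (fun x : E => x) (ENNReal.ofReal p) μ) {D : E → F}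
    (hD : AEStronglyMeasurable D μ) (hb : ∀ x, ‖D x‖ ≤ C * (1 + ‖x‖ ^ (p - 1))) :
    MemLp D (ENNReal.ofReal q) μ := by
  have h := hid.norm_rpow_div (ENNReal.ofReal (p - 1))
  rw [← ENNReal.ofReal_div_of_pos hpq.sub_one_pos, ← hpq.conjugate_eq,
    ENNReal.toReal_ofReal hpq.sub_one_pos.le] at h
  exact (((memLp_const (1 : ℝ)).add h).const_mul C).mono' hD (ae_of_all _ hb)

theorem abs_sub_le_of_norm_fderiv_le_rpow {E : Type*} [NormedAddCommGroup E] [NormedSpace ℝ E]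
    {f : E → ℝ} (hf : Differentiable ℝ f) {K p : ℝ} (hp : 1 ≤ p) (hK0 : 0 ≤ K)
    (hK : ∀ x, ‖fderiv ℝ f x‖ ≤ K * (1 + ‖x‖ ^ (p - 1))) {x h : E} {δ : ℝ} (hδ0 : 0 ≤ δ)
    (hδ1 : δ ≤ 1) :
    |f (x + δ • h) - f x| ≤ δ * (2 * K * (1 + ‖x‖ + ‖h‖) ^ p) := by
  set R := ‖x‖ + ‖h‖ with hR
  have hR0 : 0 ≤ R := by positivity
  have hp1 : 0 ≤ p - 1 := by linarith
  have hmem : x + δ • h ∈ Metric.closedBall (0 : E) R := by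
    rw [mem_closedBall_zero_iff]
    refine (norm_add_le _ _).trans ?_
    rw [norm_smul, Real.norm_of_nonneg hδ0]
    nlinarith [norm_nonneg h]
  have hx : x ∈ Metric.closedBall (0 : E) R := by
    rw [mem_closedBall_zero_iff]
    linarith [norm_nonneg h]
  have hmv := Convex.norm_image_sub_le_of_norm_fderiv_le (𝕜 := ℝ) (f := f)
    (C := K * (1 + R ^ (p - 1))) (fun y _ => hf y)
    (fun y hy => (hK y).trans (by
      have hy' : ‖y‖ ≤ R := mem_closedBall_zero_iff.1 hy
      gcongr)) (convex_closedBall (0 : E) R) hx hmem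
  rw [add_sub_cancel_left, norm_smul, Real.norm_of_nonneg hδ0, Real.norm_eq_abs] at hmv
  have h1 : (1 : ℝ) ≤ (1 + R) ^ (p - 1) := Real.one_le_rpow (by linarith) hp1
  have h2 : R ^ (p - 1) ≤ (1 + R) ^ (p - 1) := by gcongr; linarith
  have h3 : (1 + R) ^ p = (1 + R) ^ (p - 1) * (1 + R) := by
    rw [← Real.rpow_add_one (by positivity), sub_add_cancel]
  rw [add_assoc, ← hR, h3]
  calc _ ≤ K * (1 + R ^ (p - 1)) * (δ * ‖h‖) := hmv
    _ ≤ K * (2 * (1 + R) ^ (p - 1)) * (δ * (1 + R)) := by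
        gcongr
        · linarith
        · linarith [norm_nonneg x]
    _ = _ := by ring

theorem tendsto_integral_slope {E : Type*} [NormedAddCommGroup E] [NormedSpace ℝ E]
    [MeasurableSpace E] [BorelSpace E] [SecondCountableTopology E]
    {μ : Measure E} [IsFiniteMeasure μ] {f : E → ℝ} (hf : ContDiff ℝ 1 f) {K p : ℝ} (hp : 1 ≤ p)
    (hK0 : 0 ≤ K) (hK : ∀ x, ‖fderiv ℝ f x‖ ≤ K * (1 + ‖x‖ ^ (p - 1)))
    (hid : MemLp (fun x : E => x) (ENNReal.ofReal p) μ) {H : E → E} (hHm : Measurable H)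
    (hH : MemLp H (ENNReal.ofReal p) μ) :
    Tendsto (fun δ : ℝ => (∫ x, (f (x + δ • H x) - f x) ∂μ) / δ) (nhdsWithin 0 (Set.Ioi 0))
      (nhds (∫ x, fderiv ℝ f x (H x) ∂μ)) := by
  have hp0 : 0 < p := by linarith
  have hfc := hf.continuous.measurable
  have hfd := hf.differentiable one_ne_zero
  simp_rw [← integral_div]
  refine tendsto_integral_filter_of_dominated_convergence
    (fun x => 2 * K * (1 + ‖x‖ + ‖H x‖) ^ p) ?_ ?_ ?_ ?_
  · refine Eventually.of_forall fun δ => Measurable.aestronglyMeasurable ?_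
    exact ((hfc.comp (measurable_id.add (hHm.const_smul δ))).sub hfc).div_const δ
  · filter_upwards [Ioc_mem_nhdsGT (zero_lt_one (α := ℝ))] with δ hδ
    refine ae_of_all _ fun x => ?_
    rw [norm_div, Real.norm_eq_abs, Real.norm_of_nonneg hδ.1.le, div_le_iff₀' hδ.1]
    exact abs_sub_le_of_norm_fderiv_le_rpow hfd hp hK0 hK hδ.1.le hδ.2
  · have h := (((memLp_const (1 : ℝ)).add hid.norm).add hH.norm).integrable_norm_rpow
      (by simpa using hp0) ENNReal.ofReal_ne_top
    rw [ENNReal.toReal_ofReal hp0.le] at h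
    refine (h.const_mul (2 * K)).congr (ae_of_all _ fun x => ?_)
    simp only [Pi.add_apply]
    rw [Real.norm_of_nonneg (by positivity)]
  · refine ae_of_all _ fun x => ?_
    have h := ((hfd x).hasFDerivAt.hasLineDerivAt (H x)).tendsto_slope_zero_right
    simpa [div_eq_inv_mul] using h

theorem memLp_vmap_comp {Ω : Type*} {m : MeasurableSpace Ω} {μ : Measure Ω} {d : ℕ} {p q : ℝ}
    (hpq : p.HolderConjugate q) {g : Ω → Fin d → ℝ} (hg : MemLp g (ENNReal.ofReal q) μ) :
    MemLp (fun x => vmap q (g x)) (ENNReal.ofReal p) μ := by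
  refine memLp_pi_iff.2 fun j => ?_
  have hm : AEStronglyMeasurable (fun x => vmap q (g x) j) μ :=
    ((measurable_pi_apply j).comp
      (measurable_vmap q)).comp_aemeasurable hg.1.aemeasurable |>.aestronglyMeasurable
  rw [← integrable_norm_rpow_iff hm (by simpa using hpq.pos) ENNReal.ofReal_ne_top,
    ENNReal.toReal_ofReal hpq.nonneg]
  have h := (memLp_pi_iff.1 hg j).integrable_norm_rpow (by simpa using hpq.symm.pos)
    ENNReal.ofReal_ne_top
  rw [ENNReal.toReal_ofReal hpq.symm.nonneg] at h
  simpa only [Real.norm_eq_abs, abs_vmap_rpow hpq] using h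

theorem memLp_deltaInv_comp {Ω : Type*} {m : MeasurableSpace Ω} {μ : Measure Ω} {N d : ℕ}
    {p : ℝ≥0∞} {Φ : Ω → PathD N d} (hΦ : MemLp Φ p μ) :
    MemLp (fun x => DeltaInv (Φ x)) p μ := by
  refine memLp_pi_iff.2 fun i => memLp_finsetSum _ fun k _ => ?_
  split_ifs
  · exact memLp_pi_iff.1 hΦ k
  · exact MemLp.zero'

theorem integral_mul_condExp_apply {Ω : Type*} {m m₀ : MeasurableSpace Ω} {μ : Measure Ω}
    [IsFiniteMeasure μ] (hm : m ≤ m₀) {d : ℕ} {D : Ω → Fin d → ℝ} (hD : Integrable D μ)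
    {w : Ω → ℝ} (hw : StronglyMeasurable[m] w) (j : Fin d)
    (hwD : Integrable (fun x => w x * D x j) μ) :
    ∫ x, w x * D x j ∂μ = ∫ x, w x * μ[D | m] x j ∂μ := by
  have h1 := (ContinuousLinearMap.proj (R := ℝ) (φ := fun _ : Fin d => ℝ) j).comp_condExp_comm
    (m := m) hD
  have h2 : μ[fun x => w x * D x j | m] =ᵐ[μ] w * μ[fun x => D x j | m] :=
    condExp_mul_of_stronglyMeasurable_left hw hwD (integrable_pi_iff.1 hD j)
  rw [← integral_condExp hm]
  refine integral_congr_ae ?_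
  filter_upwards [h1, h2] with x hx1 hx2
  rw [hx2, Pi.mul_apply]
  congr 1
  exact hx1.symm

/-- The explicit first-order optimal perturbations: with
`Φ_n = v(E_μ[𝔻_n f(X)|F_n])`, `r = ‖ᵒ𝔻f‖_{L^q(μ)}`, `u > 0` and
`π_δ = (Id, Id + uδ Δ^{-1}∘Φ)_# μ`, every `π_δ` is a causal coupling with first marginal `μ`,
`E_{π_δ}[c_N(X,Y)] = u^p r^q δ^p`, and `lim_{δ→0+} E_{π_δ}[f(Y) − f(X)]/δ = u r^q`. -/
theorem statement_10 {N d : ℕ} (p q : ℝ) (hp : 1 < p) (hq : q = p / (p - 1))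
    (μ : Measure (PathD N d)) [IsProbabilityMeasure μ]
    (hmom : Integrable (fun x : PathD N d => ‖x‖ ^ p) μ)
    (f : PathD N d → ℝ) (hf : ContDiff ℝ 1 f)
    (C : ℝ) (hgrow : ∀ n : ℕ, ∀ x : PathD N d,
      lpnorm q (Dn f n x) ≤ C * (1 + ‖x‖ ^ (p - 1)))
    (g : ℕ → PathD N d → Fin d → ℝ)
    (hgmeas : ∀ n : ℕ, 1 ≤ n → n ≤ N → Measurable[Fn N d n] (g n))
    (hgver : ∀ n : ℕ, 1 ≤ n → n ≤ N → g n =ᵐ[μ] μ[Dn f n | Fn N d n])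
    (u : ℝ) (hu : 0 < u)
    (πδ : ℝ → Measure (PathD N d × PathD N d))
    (hπδ : ∀ δ : ℝ, πδ δ =
      μ.map (fun x => (x, x + (u * δ) • DeltaInv (fun i : Fin N => vmap q (g ((i : ℕ) + 1) x))))) :
    (∀ δ : ℝ, 0 < δ → IsProbabilityMeasure (πδ δ) ∧ IsCausalStar μ (πδ δ)) ∧
    (∀ δ : ℝ, 0 < δ →
      costD p (πδ δ) = u ^ p * (optionalNorm q μ f) ^ q * δ ^ p) ∧
    Tendsto (fun δ : ℝ => (∫ z, (f z.2 - f z.1) ∂(πδ δ)) / δ)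
      (nhdsWithin 0 (Set.Ioi 0))
      (nhds (u * (optionalNorm q μ f) ^ q)) := by
  have hpq : p.HolderConjugate q := (Real.holderConjugate_iff_eq_conjExponent hp).2 hq
  have hp0 : 0 < p := hpq.pos
  have hq0 : 0 < q := hpq.symm.pos
  have hC : 0 ≤ C := nonneg_of_mul_nonneg_left
    ((lpnorm_nonneg _ _).trans (hgrow 0 0)) (by positivity)
  have hid := memLp_id_of_integrable_norm_rpow hp0 hmom
  have hDL (n : ℕ) : MemLp (Dn f n) (ENNReal.ofReal q) μ := by
    refine memLp_of_norm_le_one_add_rpow (C := C) hpq hid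
      (continuous_Dn hf n).aestronglyMeasurable fun x => ?_
    exact (pi_norm_le_iff_of_nonneg (by positivity)).2 fun j =>
      (abs_le_lpnorm hq0 _ j).trans (hgrow n x)
  have hq1 : 1 ≤ ENNReal.ofReal q := by simpa using hpq.symm.lt.le
  have hgF (n : Fin N) : Measurable[Fn N d (n + 1)] (g (n + 1)) :=
    hgmeas _ (by omega) (by omega)
  have hgE (n : Fin N) : g (n + 1) =ᵐ[μ] μ[Dn f (n + 1) | Fn N d (n + 1)] :=
    hgver _ (by omega) (by omega)
  have hgL (n : Fin N) : MemLp (g (n + 1)) (ENNReal.ofReal q) μ :=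
    (memLp_congr_ae (hgE n)).2 ((hDL _).condExp hq1)
  set Φ : PathD N d → PathD N d := fun x i => vmap q (g ((i : ℕ) + 1) x) with hΦ
  have hΦF (n : Fin N) : Measurable[Fn N d (n + 1)] fun x => Φ x n :=
    (measurable_vmap q).comp (hgF n)
  have hΦm : Measurable Φ := measurable_pi_iff.2 fun n => (hΦF n).mono (Fn_le N d _) le_rfl
  have hΦL : MemLp Φ (ENNReal.ofReal p) μ :=
    memLp_pi_iff.2 fun n => memLp_vmap_comp hpq (hgL n)
  have hHm : Measurable fun x => DeltaInv (Φ x) := measurable_deltaInv.comp hΦm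
  have hTm (c : ℝ) : Measurable fun x => x + c • DeltaInv (Φ x) :=
    measurable_id.add (hHm.const_smul c)
  have hpair (c : ℝ) : Measurable fun x => (x, x + c • DeltaInv (Φ x)) :=
    measurable_id.prodMk (hTm c)
  have hgint (n : Fin N) (j : Fin d) : Integrable (fun x => |g (n + 1) x j| ^ q) μ := by
    have h := (memLp_pi_iff.1 (hgL n) j).integrable_norm_rpow (by simpa using hq0)
      ENNReal.ofReal_ne_top
    rwa [ENNReal.toReal_ofReal hq0.le] at h
  have hnorm : optionalNorm q μ f ^ q = ∑ n : Fin N, ∑ j, ∫ x, |g (n + 1) x j| ^ q ∂μ := by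
    rw [optionalNorm_rpow hq0.ne']
    refine Finset.sum_congr rfl fun n _ => ?_
    rw [← integral_finsetSum _ fun j _ => hgint n j]
    refine integral_congr_ae ?_
    filter_upwards [hgE n] with x hx
    simp only [hx]
  have hΦD (n : Fin N) (j : Fin d) : Integrable (fun x => Φ x n j * Dn f (n + 1) x j) μ := by
    have := hpq.ennrealOfReal
    exact (memLp_pi_iff.1 (memLp_pi_iff.1 hΦL n) j).integrable_mul (memLp_pi_iff.1 (hDL _) j)
  refine ⟨fun δ _ => ⟨?_, ?_⟩, fun δ hδ => ?_, ?_⟩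
  · rw [hπδ]
    exact Measure.isProbabilityMeasure_map (hpair _).aemeasurable
  · rw [hπδ]
    exact isCausalStar_map_prodMk (hTm _) (measurable_Fn_add_smul_deltaInv _ hΦF)
  · have huδ : 0 ≤ u * δ := by positivity
    rw [costD, hπδ, integral_map (hpair _).aemeasurable (measurable_cN p).aestronglyMeasurable]
    simp_rw [cN_add_smul_deltaInv hp0.ne' huδ, hΦ, abs_vmap_rpow hpq]
    rw [integral_const_mul, integral_finsetSum _ fun n _ =>
      integrable_finsetSum _ fun j _ => hgint n j, hnorm, Real.mul_rpow hu.le hδ.le]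
    simp_rw [integral_finsetSum _ fun j _ => hgint _ j]
    ring
  · have hlim := tendsto_integral_slope (μ := μ) hf hp.le
      (by positivity : 0 ≤ (N * d * 2) * C)
      (fun x => (norm_fderiv_le hq0 fun n => hgrow n x).trans_eq (mul_assoc _ _ _).symm)
      hid (hHm.const_smul u) ((memLp_deltaInv_comp hΦL).const_smul u)
    have hval : ∫ x, fderiv ℝ f x (u • DeltaInv (Φ x)) ∂μ = u * optionalNorm q μ f ^ q := by
      simp_rw [map_smul, smul_eq_mul, fderiv_deltaInv]
      rw [integral_const_mul, integral_finsetSum _ fun n _ =>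
        integrable_finsetSum _ fun j _ => hΦD n j, hnorm]
      congr 1
      refine Finset.sum_congr rfl fun n _ => ?_
      rw [integral_finsetSum _ fun j _ => hΦD n j]
      refine Finset.sum_congr rfl fun j _ => ?_
      rw [integral_mul_condExp_apply (w := fun x => Φ x n j) (Fn_le N d (n + 1))
        ((hDL _).integrable hq1)
        ((measurable_pi_apply j).comp (hΦF n)).stronglyMeasurable j (hΦD n j)]
      refine integral_congr_ae ?_
      filter_upwards [hgE n] with x hx
      rw [← hx]
      exact vmap_mul_self hq0.ne' _ j
    have hfc := hf.continuous
    rw [← hval]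
    refine hlim.congr fun δ => ?_
    rw [hπδ, integral_map (hpair _).aemeasurable
      (Continuous.aestronglyMeasurable (by fun_prop))]
    simp only [Pi.smul_apply, smul_smul, mul_comm δ u]
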